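/- Fix S ⊆ N and j ∉ S, and let T := S ∪ {j}. Then for every i ∈ N, ν_i^T = ν_j^S − (w_i^S / w_i^T) · (ν_j^S − ν_i^S). (Proposition 5: one-step update formula for the marginal productivity rates.) -/

import Mathlib

open Matrix BigOperators
open scoped Classical

noncomputable section

/-- Transition matrix of the `S`-active policy: row `i` of `P` if `i ∈ S`,
the `i`-th standard unit row otherwise. -/
def PAct {N : Type*} [DecidableEq N] (P : Matrix N N ℝ) (S : Finset N) : Matrix N N ℝ :=
  fun i j => if i ∈ S then P i j else if i = j then 1 else 0

/-- Transition matrix of the `Sᶜ`-active policy. -/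
def PPas {N : Type*} [DecidableEq N] (P : Matrix N N ℝ) (S : Finset N) : Matrix N N ℝ :=
  fun i j => if i ∈ S then (if i = j then 1 else 0) else P i j

/-- Basis matrix `B^S = I - β P^S`. -/
def BMat {N : Type*} [Fintype N] [DecidableEq N] (β : ℝ) (P : Matrix N N ℝ) (S : Finset N) :
    Matrix N N ℝ := 1 - β • PAct P S

/-- Non-basic matrix `N^S = I - β P^{Sᶜ}`. -/
def NMat {N : Type*} [Fintype N] [DecidableEq N] (β : ℝ) (P : Matrix N N ℝ) (S : Finset N) :
    Matrix N N ℝ := 1 - β • PPas P S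

/-- Basis inverse `H^S = (B^S)⁻¹`. -/
def HMat {N : Type*} [Fintype N] [DecidableEq N] (β : ℝ) (P : Matrix N N ℝ) (S : Finset N) :
    Matrix N N ℝ := (BMat β P S)⁻¹

/-- Tableau matrix `A^S = N^S · H^S`. -/
def AMat {N : Type*} [Fintype N] [DecidableEq N] (β : ℝ) (P : Matrix N N ℝ) (S : Finset N) :
    Matrix N N ℝ := NMat β P S * HMat β P S

/-- Work measure `g^S = H^S · 1_S`. -/
def gWork {N : Type*} [Fintype N] [DecidableEq N] (β : ℝ) (P : Matrix N N ℝ) (S : Finset N) :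
    N → ℝ := (HMat β P S).mulVec (fun j => if j ∈ S then 1 else 0)

/-- Reward measure `f^S = H^S · (R·1_S)`. -/
def fRew {N : Type*} [Fintype N] [DecidableEq N] (β : ℝ) (P : Matrix N N ℝ) (R : N → ℝ)
    (S : Finset N) : N → ℝ := (HMat β P S).mulVec (fun j => if j ∈ S then R j else 0)

/-- Marginal work `w_i^S`. -/
def wMarg {N : Type*} [Fintype N] [DecidableEq N] (β : ℝ) (P : Matrix N N ℝ) (S : Finset N)
    (i : N) : ℝ :=
  if i ∈ S then (1 - β) * gWork β P S i
  else 1 + β * ∑ j ∈ S, P i j * gWork β P S j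

/-- Marginal reward `r_i^S`. -/
def rMarg {N : Type*} [Fintype N] [DecidableEq N] (β : ℝ) (P : Matrix N N ℝ) (R : N → ℝ)
    (S : Finset N) (i : N) : ℝ :=
  if i ∈ S then (1 - β) * fRew β P R S i
  else R i + β * ∑ j ∈ S, P i j * fRew β P R S j

/-- Marginal productivity rate `ν_i^S = r_i^S / w_i^S`. -/
def nuMarg {N : Type*} [Fintype N] [DecidableEq N] (β : ℝ) (P : Matrix N N ℝ) (R : N → ℝ)
    (S : Finset N) (i : N) : ℝ := rMarg β P R S i / wMarg β P S i

/-- Feasibility of a pair of row vectors `(x⁰, x¹)` for initial state `i`: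
`x⁰, x¹ ≥ 0` and `(1-β) x⁰ + x¹ (I - β P) = e_i`. -/
def Feasible {N : Type*} [Fintype N] [DecidableEq N] (β : ℝ) (P : Matrix N N ℝ) (i : N)
    (x0 x1 : N → ℝ) : Prop :=
  (∀ j, 0 ≤ x0 j) ∧ (∀ j, 0 ≤ x1 j) ∧
    (1 - β) • x0 + Matrix.vecMul x1 (1 - β • P) = Pi.single i 1

/-- Modified reward vector `R̂ = R - (I - βP)·Q`. -/
def Rhat {N : Type*} [Fintype N] [DecidableEq N] (β : ℝ) (P : Matrix N N ℝ) (R Q : N → ℝ) :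
    N → ℝ := fun i => R i - ((1 - β • P).mulVec Q) i

/-!
The vector `f^S` vanishes off `S` and solves `f = R + β P f` on `S`, so the two cases in the
definition of the marginal reward are both instances of `r^S = R + β (P - I) f^S`. Applying `B^T`
with `T = S ∪ {j}` to `f^S` gives the right-hand side defining `f^T`, except that the `j`-th entry
falls short of it by `r_j^S`. Hence `f^T = f^S + r_j^S H^T e_j`, and `r^T = r^S + r_j^S h` for a
vector `h` independent of `R`. Taking `R = 1` gives `w^T = w^S + w_j^S h` with the same `h`, and
eliminating `h_i` from the two relations is the update formula.

Invertibility of `B^S` and positivity of `w^S` both come from the minimum principle: a matrix with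
nonpositive off-diagonal entries and positive row sums has `x ≥ 0` whenever `A x ≥ 0`.
-/

section DiagonallyDominant

variable {n R : Type*} [Fintype n]

theorem nonneg_of_mulVec_nonneg [Ring R] [LinearOrder R] [IsStrictOrderedRing R]
    {A : Matrix n n R} (hoff : ∀ i j, i ≠ j → A i j ≤ 0) (hrow : ∀ i, 0 < ∑ j, A i j)
    {x : n → R} (hx : 0 ≤ A *ᵥ x) : 0 ≤ x := by
  intro i
  have : Nonempty n := ⟨i⟩
  obtain ⟨m, hm⟩ := Finite.exists_min x
  have hle : (A *ᵥ x) m ≤ (∑ k, A m k) * x m := by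
    rw [Finset.sum_mul]
    refine Finset.sum_le_sum fun k _ ↦ ?_
    rcases eq_or_ne m k with rfl | hmk
    · rfl
    · exact mul_le_mul_of_nonpos_left (hm k) (hoff m k hmk)
  have hxm : 0 ≤ x m := (mul_nonneg_iff_of_pos_left (hrow m)).1 ((hx m).trans hle)
  exact hxm.trans (hm i)

theorem isUnit_of_offDiag_nonpos_of_sum_row_pos [DecidableEq n] [Field R] [LinearOrder R]
    [IsStrictOrderedRing R] {A : Matrix n n R} (hoff : ∀ i j, i ≠ j → A i j ≤ 0)
    (hrow : ∀ i, 0 < ∑ j, A i j) : IsUnit A := by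
  rw [← Matrix.mulVec_injective_iff_isUnit]
  refine (injective_iff_map_eq_zero A.mulVecLin).2 fun x (hx : A *ᵥ x = 0) ↦ ?_
  have hnonneg : 0 ≤ x := nonneg_of_mulVec_nonneg hoff hrow hx.ge
  have hneg : 0 ≤ -x := nonneg_of_mulVec_nonneg hoff hrow (by rw [mulVec_neg, hx, neg_zero])
  exact le_antisymm (neg_nonneg.1 hneg) hnonneg

end DiagonallyDominant

theorem add_mul_div_eq_sub_div_mul_sub {K : Type*} [Field K] {a b s t : K} (c d : K)
    (ha : a ≠ 0) (hb : b ≠ 0) (hs : s ≠ 0) (hst : s = a + b * t) :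
    (c + d * t) / s = d / b - a / s * (d / b - c / a) := by
  field_simp
  rw [hst]
  ring

section Marginal

variable {N : Type*} [Fintype N] [DecidableEq N] {β : ℝ} {P : Matrix N N ℝ} {R : N → ℝ}
  {S : Finset N} {i j : N}

theorem bMat_mulVec_of_mem (hi : i ∈ S) (x : N → ℝ) :
    (BMat β P S *ᵥ x) i = x i - β * (P *ᵥ x) i := by
  rw [BMat, sub_mulVec, one_mulVec, smul_mulVec]
  simp [mulVec, dotProduct, PAct, hi]

theorem bMat_mulVec_of_notMem (hi : i ∉ S) (x : N → ℝ) :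
    (BMat β P S *ᵥ x) i = (1 - β) * x i := by
  rw [BMat, sub_mulVec, one_mulVec, smul_mulVec]
  simp [mulVec, dotProduct, PAct, hi, sub_mul]

theorem one_sub_ne_zero_of_isUnit_bMat (hB : IsUnit (BMat β P S)) (hi : i ∉ S) :
    1 - β ≠ 0 := by
  obtain ⟨x, hx⟩ := mulVec_surjective_iff_isUnit.2 hB (Pi.single i 1)
  have hxi : (1 - β) * x i = 1 := by
    rw [← bMat_mulVec_of_notMem hi, hx, Pi.single_eq_same]
  exact left_ne_zero_of_mul_eq_one hxi

theorem bMat_mulVec_fRew (hB : IsUnit (BMat β P S)) :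
    BMat β P S *ᵥ fRew β P R S = fun i ↦ if i ∈ S then R i else 0 := by
  rw [fRew, HMat, mulVec_mulVec, mul_nonsing_inv _ ((isUnit_iff_isUnit_det _).1 hB), one_mulVec]

theorem fRew_of_mem (hB : IsUnit (BMat β P S)) (hi : i ∈ S) :
    fRew β P R S i = R i + β * (P *ᵥ fRew β P R S) i := by
  have h := congrFun (bMat_mulVec_fRew (R := R) hB) i
  rw [bMat_mulVec_of_mem hi, if_pos hi] at h
  exact sub_eq_iff_eq_add.1 h

theorem fRew_of_notMem (hB : IsUnit (BMat β P S)) (hi : i ∉ S) : fRew β P R S i = 0 := by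
  have h := congrFun (bMat_mulVec_fRew (R := R) hB) i
  rw [bMat_mulVec_of_notMem hi, if_neg hi] at h
  exact (mul_eq_zero.1 h).resolve_left (one_sub_ne_zero_of_isUnit_bMat hB hi)

theorem sum_mul_fRew_eq_mulVec (hB : IsUnit (BMat β P S)) (i : N) :
    ∑ k ∈ S, P i k * fRew β P R S k = (P *ᵥ fRew β P R S) i :=
  Finset.sum_subset (Finset.subset_univ S) fun k _ hk ↦ by rw [fRew_of_notMem hB hk, mul_zero]

theorem wMarg_eq_rMarg_one : wMarg β P S = rMarg β P 1 S := rfl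

theorem rMarg_eq_add_smul_mulVec (hB : IsUnit (BMat β P S)) :
    rMarg β P R S = R + β • ((P - 1) *ᵥ fRew β P R S) := by
  ext i
  simp only [rMarg, sum_mul_fRew_eq_mulVec hB, Pi.add_apply, Pi.smul_apply, sub_mulVec,
    one_mulVec, Pi.sub_apply, smul_eq_mul]
  split_ifs with hi
  · linear_combination fRew_of_mem (R := R) hB hi
  · rw [fRew_of_notMem hB hi, sub_zero]

theorem bMat_insert_mulVec_fRew (hB : IsUnit (BMat β P S)) (hj : j ∉ S) :
    BMat β P (insert j S) *ᵥ fRew β P R S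
      = (fun i ↦ if i ∈ insert j S then R i else 0) - rMarg β P R S j • Pi.single j 1 := by
  ext i
  rcases eq_or_ne i j with rfl | hij
  · have hr : rMarg β P R S i = R i + β * (P *ᵥ fRew β P R S) i := by
      rw [rMarg, if_neg hj, sum_mul_fRew_eq_mulVec hB]
    simp [bMat_mulVec_of_mem (Finset.mem_insert_self i S), fRew_of_notMem hB hj, hr]
  · have hrow : (BMat β P (insert j S) *ᵥ fRew β P R S) i = (BMat β P S *ᵥ fRew β P R S) i := by
      by_cases hi : i ∈ S
      · rw [bMat_mulVec_of_mem (Finset.mem_insert_of_mem hi), bMat_mulVec_of_mem hi]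
      · rw [bMat_mulVec_of_notMem (by simp [hij, hi]), bMat_mulVec_of_notMem hi]
    simp [hrow, bMat_mulVec_fRew hB, hij]

theorem fRew_insert (hB : IsUnit (BMat β P S)) (hB' : IsUnit (BMat β P (insert j S)))
    (hj : j ∉ S) :
    fRew β P R (insert j S)
      = fRew β P R S + rMarg β P R S j • (HMat β P (insert j S) *ᵥ Pi.single j 1) := by
  have hdet := (isUnit_iff_isUnit_det _).1 hB'
  rw [fRew, ← sub_eq_iff_eq_add, ← mulVec_smul, ← mulVec_sub, ← bMat_insert_mulVec_fRew hB hj,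
    HMat, mulVec_mulVec, nonsing_inv_mul _ hdet, one_mulVec]

/-- The vector `β (P - I) H^T e_j`: the change in the marginal rewards, per unit of `r_j^S`, when
`j` joins `S` to give `T`. It does not depend on the rewards, so it also governs the change in the
marginal work. -/
def marginalShift (β : ℝ) (P : Matrix N N ℝ) (T : Finset N) (j : N) : N → ℝ :=
  β • ((P - 1) *ᵥ (HMat β P T *ᵥ Pi.single j 1))

theorem rMarg_insert (hB : IsUnit (BMat β P S)) (hB' : IsUnit (BMat β P (insert j S)))
    (hj : j ∉ S) (i : N) :
    rMarg β P R (insert j S) i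
      = rMarg β P R S i + rMarg β P R S j * marginalShift β P (insert j S) j i := by
  rw [rMarg_eq_add_smul_mulVec hB', fRew_insert hB hB' hj, mulVec_add, mulVec_smul, smul_add,
    ← add_assoc, ← rMarg_eq_add_smul_mulVec hB, smul_comm]
  rfl

theorem wMarg_insert (hB : IsUnit (BMat β P S)) (hB' : IsUnit (BMat β P (insert j S)))
    (hj : j ∉ S) (i : N) :
    wMarg β P (insert j S) i
      = wMarg β P S i + wMarg β P S j * marginalShift β P (insert j S) j i := by
  simp only [wMarg_eq_rMarg_one]
  exact rMarg_insert hB hB' hj i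

end Marginal

section Discounted

variable {N : Type*} [Fintype N] [DecidableEq N] {β : ℝ} {P : Matrix N N ℝ}

theorem bMat_nonpos_of_ne (hP0 : ∀ i j, 0 ≤ P i j) (hβ0 : 0 ≤ β) (S : Finset N) (i j : N)
    (hij : i ≠ j) : BMat β P S i j ≤ 0 := by
  have hβP : 0 ≤ β * P i j := mul_nonneg hβ0 (hP0 i j)
  by_cases hi : i ∈ S <;> simp [BMat, PAct, hi, hij, hβP]

theorem sum_row_bMat_pos (hβ1 : β < 1) (hβP : ∀ i, β * ∑ j, P i j < 1) (S : Finset N) (i : N) :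
    0 < ∑ j, BMat β P S i j := by
  have hsum (A : Matrix N N ℝ) : ∑ j, A i j = (A *ᵥ 1) i := (dotProduct_one (A i)).symm
  specialize hβP i
  rw [hsum] at hβP ⊢
  by_cases hi : i ∈ S
  · rw [bMat_mulVec_of_mem hi]
    exact sub_pos.2 hβP
  · rw [bMat_mulVec_of_notMem hi]
    exact mul_pos (sub_pos.2 hβ1) one_pos

theorem isUnit_bMat (hP0 : ∀ i j, 0 ≤ P i j) (hβ0 : 0 ≤ β) (hβ1 : β < 1)
    (hβP : ∀ i, β * ∑ j, P i j < 1) (S : Finset N) : IsUnit (BMat β P S) :=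
  isUnit_of_offDiag_nonpos_of_sum_row_pos (bMat_nonpos_of_ne hP0 hβ0 S)
    (sum_row_bMat_pos hβ1 hβP S)

theorem fRew_nonneg (hP0 : ∀ i j, 0 ≤ P i j) (hβ0 : 0 ≤ β) (hβ1 : β < 1)
    (hβP : ∀ i, β * ∑ j, P i j < 1) {R : N → ℝ} (hR : 0 ≤ R) (S : Finset N) :
    0 ≤ fRew β P R S := by
  refine nonneg_of_mulVec_nonneg (bMat_nonpos_of_ne hP0 hβ0 S) (sum_row_bMat_pos hβ1 hβP S) ?_
  rw [bMat_mulVec_fRew (isUnit_bMat hP0 hβ0 hβ1 hβP S)]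
  intro i
  by_cases hi : i ∈ S
  · simpa [hi] using hR i
  · simp [hi]

theorem rMarg_pos (hP0 : ∀ i j, 0 ≤ P i j) (hβ0 : 0 ≤ β) (hβ1 : β < 1)
    (hβP : ∀ i, β * ∑ j, P i j < 1) {R : N → ℝ} (hR : ∀ i, 0 < R i) (S : Finset N) (i : N) :
    0 < rMarg β P R S i := by
  have hB := isUnit_bMat hP0 hβ0 hβ1 hβP S
  have hf : 0 ≤ fRew β P R S := fRew_nonneg hP0 hβ0 hβ1 hβP (fun k ↦ (hR k).le) S
  have hactive : 0 < R i + β * (P *ᵥ fRew β P R S) i :=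
    add_pos_of_pos_of_nonneg (hR i) <|
      mul_nonneg hβ0 <| Finset.sum_nonneg fun k _ ↦ mul_nonneg (hP0 i k) (hf k)
  rw [rMarg, sum_mul_fRew_eq_mulVec hB]
  split_ifs with hi
  · rw [fRew_of_mem hB hi]
    exact mul_pos (sub_pos.2 hβ1) hactive
  · exact hactive

theorem wMarg_pos (hP0 : ∀ i j, 0 ≤ P i j) (hβ0 : 0 ≤ β) (hβ1 : β < 1)
    (hβP : ∀ i, β * ∑ j, P i j < 1) (S : Finset N) (i : N) : 0 < wMarg β P S i := by
  rw [wMarg_eq_rMarg_one]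
  exact rMarg_pos hP0 hβ0 hβ1 hβP (fun _ ↦ one_pos) S i

theorem stmt10_general (hP0 : ∀ i j, 0 ≤ P i j) (hβ0 : 0 ≤ β) (hβ1 : β < 1)
    (hβP : ∀ i, β * ∑ j, P i j < 1) (R : N → ℝ) (S : Finset N) (j : N) (hj : j ∉ S) (i : N) :
    nuMarg β P R (insert j S) i
      = nuMarg β P R S j
        - (wMarg β P S i / wMarg β P (insert j S) i)
          * (nuMarg β P R S j - nuMarg β P R S i) := by
  have hB := isUnit_bMat hP0 hβ0 hβ1 hβP
  have hw (T : Finset N) (k : N) : wMarg β P T k ≠ 0 := (wMarg_pos hP0 hβ0 hβ1 hβP T k).ne'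
  have hr_insert := rMarg_insert (R := R) (hB S) (hB (insert j S)) hj i
  have hw_insert := wMarg_insert (hB S) (hB (insert j S)) hj i
  rw [nuMarg, hr_insert]
  exact add_mul_div_eq_sub_div_mul_sub _ _ (hw S i) (hw S j) (hw (insert j S) i) hw_insert

end Discounted

/-- Proposition 5: one-step update formula for the marginal
productivity rates. -/
theorem stmt10 {N : Type*} [Fintype N] [DecidableEq N] [Nonempty N]
    (P : Matrix N N ℝ) (hP0 : ∀ i j, 0 ≤ P i j) (hP1 : ∀ i, ∑ j, P i j = 1)
    (β : ℝ) (hβ0 : 0 < β) (hβ1 : β < 1) (R : N → ℝ)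
    (S : Finset N) (j : N) (hj : j ∉ S) (i : N) :
    nuMarg β P R (insert j S) i
      = nuMarg β P R S j
        - (wMarg β P S i / wMarg β P (insert j S) i)
          * (nuMarg β P R S j - nuMarg β P R S i) :=
  stmt10_general hP0 hβ0.le hβ1 (fun i ↦ by rwa [hP1 i, mul_one]) R S j hj i
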